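/- For every integer n ≥ 1, T(n, n-1) = (1/4)·binom(2n, 3), where binom denotes the binomial coefficient. -/

import Mathlib

/-- Stirling numbers of the first kind with level 2. -/
def T2 : ℕ → ℕ → ℕ
  | 0, 0 => 1
  | 0, _ + 1 => 0
  | _ + 1, 0 => 0
  | n + 1, m + 1 => T2 n m + n ^ 2 * T2 n (m + 1)

/-!
Since `T2 n n = 1`, the recurrence increases `T2 (n + 1) n` by `(n + 1) ^ 2` at each step, so
`T2 (n + 1) n` is the sum of the squares up to `n`. Two applications of Pascal's rule show that
`(2 * n).choose 3` has the same increments up to a factor `4`, because two consecutive triangular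
numbers add up to a square and `(2 * n) ^ 2 = 4 * n ^ 2`.
-/

theorem T2_eq_zero_of_lt {n m : ℕ} (h : n < m) : T2 n m = 0 := by
  induction n generalizing m with
  | zero =>
    obtain ⟨m, rfl⟩ := Nat.exists_eq_add_one.mpr h
    rw [T2]
  | succ n ih =>
    obtain ⟨m, rfl⟩ := Nat.exists_eq_add_one.mpr (Nat.zero_lt_of_lt h)
    rw [T2, ih (by lia), ih (by lia), mul_zero, add_zero]

theorem T2_self (n : ℕ) : T2 n n = 1 := by
  induction n with
  | zero => rw [T2]
  | succ n ih => rw [T2, ih, T2_eq_zero_of_lt n.lt_succ_self, mul_zero, add_zero]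

theorem T2_succ_self_left (n : ℕ) : T2 (n + 1) n = ∑ i ∈ Finset.range (n + 1), i ^ 2 := by
  induction n with
  | zero => simp [T2]
  | succ n ih => rw [T2, ih, T2_self, mul_one, Finset.sum_range_succ _ (n + 1)]

theorem choose_two_add_choose_succ_two (n : ℕ) : n.choose 2 + (n + 1).choose 2 = n ^ 2 := by
  induction n with
  | zero => rfl
  | succ n ih =>
    simp only [Nat.choose_succ_succ' _ 1, Nat.choose_one_right] at ih ⊢
    linarith

theorem four_mul_sum_range_sq (n : ℕ) :
    4 * ∑ i ∈ Finset.range n, i ^ 2 = (2 * n).choose 3 := by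
  induction n with
  | zero => rfl
  | succ n ih =>
    calc 4 * ∑ i ∈ Finset.range (n + 1), i ^ 2
        = (2 * n).choose 3 + (2 * n) ^ 2 := by
          rw [Finset.sum_range_succ, mul_add, ih, mul_pow]
          norm_num
      _ = (2 * n).choose 3 + ((2 * n).choose 2 + (2 * n + 1).choose 2) := by
          rw [choose_two_add_choose_succ_two]
      _ = (2 * (n + 1)).choose 3 := by
          rw [mul_add_one, Nat.choose_succ_succ' (2 * n + 1) 2, Nat.choose_succ_succ' (2 * n) 2]
          ring

theorem statement18 (n : ℕ) (hn : 1 ≤ n) :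
    (T2 n (n - 1) : ℚ) = 1 / 4 * (Nat.choose (2 * n) 3 : ℚ) := by
  obtain ⟨k, rfl⟩ := Nat.exists_eq_add_one.mpr hn
  rw [Nat.add_sub_cancel, T2_succ_self_left, ← four_mul_sum_range_sq]
  push_cast
  ring
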